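/- Let G be a finite bipartite graph with color classes A and B, b : V(G) → ℕ, let C be a b-inconsistent flexible component hooked up by A, and let D be any b-flexible component that is not a b-inconsistent component hooked up by A. Then every edge between V(C) ∩ A and V(D) ∩ B is b-inevitable, and every edge between V(D) ∩ A and V(C) ∩ B is b-forbidden. -/

import Mathlib

open scoped symmDiff

variable {V : Type} [Fintype V]

/-- `G` is bipartite with color classes `A` and `B`. -/
structure Bipartition (G : SimpleGraph V) (A B : Set V) : Prop where
  disjoint : Disjoint A B
  cover : A ∪ B = Set.univ
  between : ∀ ⦃u v : V⦄, G.Adj u v → (u ∈ A ∧ v ∈ B) ∨ (u ∈ B ∧ v ∈ A)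

/-- `M` is a `b`-matching of `G`: a set of edges of `G` such that each vertex `v` is
incident to at most `b v` edges of `M`. -/
def IsBMatching (G : SimpleGraph V) (b : V → ℕ) (M : Set (Sym2 V)) : Prop :=
  M ⊆ G.edgeSet ∧ ∀ v : V, {e ∈ M | v ∈ e}.ncard ≤ b v

/-- `M` is a maximum `b`-matching of `G`. -/
def IsMaxBMatching (G : SimpleGraph V) (b : V → ℕ) (M : Set (Sym2 V)) : Prop :=
  IsBMatching G b M ∧ ∀ N : Set (Sym2 V), IsBMatching G b N → N.ncard ≤ M.ncard

/-- `E[X]`: the set of edges of `G` with both ends in `X`. -/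
def edgesIn (G : SimpleGraph V) (X : Set V) : Set (Sym2 V) :=
  {e ∈ G.edgeSet | ∀ v ∈ e, v ∈ X}

/-- `b(X) = ∑_{v ∈ X} b v`. -/
noncomputable def bSum (b : V → ℕ) (X : Set V) : ℕ := ∑ᶠ v ∈ X, b v

/-- `Z` is a `b`-verifying set: `b(Zᶜ) + |E[Z]|` equals the size of a maximum `b`-matching. -/
def IsVerifying (G : SimpleGraph V) (b : V → ℕ) (Z : Set V) : Prop :=
  ∃ M : Set (Sym2 V), IsMaxBMatching G b M ∧ bSum b Zᶜ + (edgesIn G Z).ncard = M.ncard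

/-- `v` is `M`-tight. -/
def IsTight (b : V → ℕ) (M : Set (Sym2 V)) (v : V) : Prop :=
  {e ∈ M | v ∈ e}.ncard = b v

/-- `v` is `M`-loose. -/
def IsLoose (b : V → ℕ) (M : Set (Sym2 V)) (v : V) : Prop :=
  {e ∈ M | v ∈ e}.ncard < b v

/-- `M` is a perfect `b`-matching. -/
def IsPerfect (G : SimpleGraph V) (b : V → ℕ) (M : Set (Sym2 V)) : Prop :=
  IsBMatching G b M ∧ ∀ v : V, IsTight b M v

/-- An edge is `b`-inevitable if it is an edge of `G` contained in every maximum `b`-matching. -/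
def IsInevitable (G : SimpleGraph V) (b : V → ℕ) (e : Sym2 V) : Prop :=
  e ∈ G.edgeSet ∧ ∀ M : Set (Sym2 V), IsMaxBMatching G b M → e ∈ M

/-- An edge is `b`-forbidden if it is an edge of `G` contained in no maximum `b`-matching. -/
def IsForbidden (G : SimpleGraph V) (b : V → ℕ) (e : Sym2 V) : Prop :=
  e ∈ G.edgeSet ∧ ∀ M : Set (Sym2 V), IsMaxBMatching G b M → e ∉ M

/-- An edge is `b`-flexible if some maximum `b`-matching contains it and some does not. -/
def IsFlexibleEdge (G : SimpleGraph V) (b : V → ℕ) (e : Sym2 V) : Prop :=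
  (∃ M : Set (Sym2 V), IsMaxBMatching G b M ∧ e ∈ M) ∧
  (∃ M : Set (Sym2 V), IsMaxBMatching G b M ∧ e ∉ M)

/-- The spanning subgraph of `G` whose edges are the `b`-flexible edges. -/
def flexGraph (G : SimpleGraph V) (b : V → ℕ) : SimpleGraph V where
  Adj u v := IsFlexibleEdge G b s(u, v)
  symm := by
    constructor
    intro u v h
    rwa [Sym2.eq_swap] at h
  loopless := by
    constructor
    intro v h
    obtain ⟨⟨M, hM, heM⟩, -⟩ := h
    exact G.loopless.irrefl v ((G.mem_edgeSet).mp (hM.1.1 heM))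

/-- A `b`-flexible component of `G`, identified with the corresponding connected
component of the spanning subgraph of flexible edges. -/
abbrev FlexComp (G : SimpleGraph V) (b : V → ℕ) := (flexGraph G b).ConnectedComponent

/-- `D(G;b)`: the set of vertices that are `M`-loose for some maximum `b`-matching `M`. -/
def Dset (G : SimpleGraph V) (b : V → ℕ) : Set V :=
  {v | ∃ M : Set (Sym2 V), IsMaxBMatching G b M ∧ IsLoose b M v}

/-- `c` is a `b`-loose flexible component. -/
def LooseComp (G : SimpleGraph V) (b : V → ℕ) (c : FlexComp G b) : Prop :=
  ∃ v ∈ c.supp, v ∈ Dset G b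

/-- `c` is a `b`-inactive flexible component. -/
def InactiveComp (G : SimpleGraph V) (b : V → ℕ) (c : FlexComp G b) : Prop :=
  ∃ v, c.supp = {v} ∧ b v = 0

/-- `c` is a `b`-inconsistent flexible component. -/
def InconsistentComp (G : SimpleGraph V) (b : V → ℕ) (c : FlexComp G b) : Prop :=
  LooseComp G b c ∨ ∃ v, c.supp = {v} ∧ b v = 0 ∧ ∃ u ∈ Dset G b, G.Adj v u

/-- `c` is a `b`-consistent flexible component. -/
def ConsistentComp (G : SimpleGraph V) (b : V → ℕ) (c : FlexComp G b) : Prop :=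
  ¬ InconsistentComp G b c

/-- `c` is a `b`-loose flexible component hooked up by the color class `W`. -/
def LooseHooked (G : SimpleGraph V) (b : V → ℕ) (W : Set V) (c : FlexComp G b) : Prop :=
  ∃ v ∈ c.supp ∩ W, v ∈ Dset G b

/-- `c` is a `b`-inactive flexible component hooked up by the color class `W`. -/
def InactiveHooked (G : SimpleGraph V) (b : V → ℕ) (W : Set V) (c : FlexComp G b) : Prop :=
  ∃ v, c.supp = {v} ∧ b v = 0 ∧ ∃ u ∈ Dset G b ∩ W, G.Adj v u

/-- `c` is a `b`-inconsistent flexible component hooked up by the color class `W`. -/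
def HookedUp (G : SimpleGraph V) (b : V → ℕ) (W : Set V) (c : FlexComp G b) : Prop :=
  LooseHooked G b W c ∨ InactiveHooked G b W c

/-- `X` is separating: empty or a union of vertex sets of `b`-flexible components. -/
def IsSeparating (G : SimpleGraph V) (b : V → ℕ) (X : Set V) : Prop :=
  ∃ S : Set (FlexComp G b), X = ⋃ c ∈ S, c.supp

/-- The number of edges in the list `es` incident to `v` that lie in `M`. -/
noncomputable def edgeDeg (es : List (Sym2 V)) (M : Set (Sym2 V)) (v : V) : ℕ :=
  {e : Sym2 V | e ∈ es ∧ v ∈ e ∧ e ∈ M}.ncard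

/-- `p` is an `M`-wedge path from `x` to `y`. -/
def IsWedgePath {G : SimpleGraph V} (M : Set (Sym2 V)) {x y : V} (p : G.Walk x y) : Prop :=
  p.IsPath ∧ (∀ v ∈ p.support, v ≠ y → edgeDeg p.edges M v = 1) ∧ edgeDeg p.edges M y = 0

/-- `p` is an `M`-saturated path between `x` and `y`. -/
def IsSaturatedPath {G : SimpleGraph V} (M : Set (Sym2 V)) {x y : V} (p : G.Walk x y) : Prop :=
  p.IsPath ∧ ∀ v ∈ p.support, edgeDeg p.edges M v = 1

/-- `p` is an `M`-exposed path between `x` and `y`. -/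
def IsExposedPath {G : SimpleGraph V} (M : Set (Sym2 V)) {x y : V} (p : G.Walk x y) : Prop :=
  p.IsPath ∧ ∀ v ∈ p.support, edgeDeg p.edges Mᶜ v = 1

/-- `p` is an `(M; A, B)`-ascending path from `u` to `v`. -/
def IsAscending {G : SimpleGraph V} (A B : Set V) (M : Set (Sym2 V)) {u v : V}
    (p : G.Walk u v) : Prop :=
  (u ∈ A → v ∈ A → IsWedgePath M p) ∧
  (u ∈ A → v ∈ B → IsSaturatedPath M p) ∧
  (u ∈ B → v ∈ A → IsExposedPath M p) ∧
  (u ∈ B → v ∈ B → IsWedgePath M p.reverse)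

/-- The one-step relation `⊴_A` on `b`-flexible components: `c₁ ⊴_A c₂` iff `c₁ = c₂`, or
there is a `b`-inevitable edge between `V(c₁) ∩ A` and `V(c₂) ∩ B`, or a `b`-forbidden edge
between `V(c₂) ∩ A` and `V(c₁) ∩ B`. -/
def StepRel (G : SimpleGraph V) (b : V → ℕ) (A B : Set V) (c₁ c₂ : FlexComp G b) : Prop :=
  c₁ = c₂ ∨
  (∃ u ∈ c₁.supp ∩ A, ∃ v ∈ c₂.supp ∩ B, IsInevitable G b s(u, v)) ∨
  (∃ u ∈ c₂.supp ∩ A, ∃ v ∈ c₁.supp ∩ B, IsForbidden G b s(u, v))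

/-- The one-step relation `⊴_A` restricted to `b`-consistent flexible components. -/
def ConsStepRel (G : SimpleGraph V) (b : V → ℕ) (A B : Set V) (c₁ c₂ : FlexComp G b) : Prop :=
  ConsistentComp G b c₁ ∧ ConsistentComp G b c₂ ∧ StepRel G b A B c₁ c₂

/-- `I` is a lower ideal of the relation `r`. -/
def IsLowerIdeal {α : Type*} (r : α → α → Prop) (I : Set α) : Prop :=
  ∀ ⦃c d : α⦄, d ∈ I → r c d → c ∈ I

/-- `I` is an upper ideal of the relation `r`. -/
def IsUpperIdeal {α : Type*} (r : α → α → Prop) (I : Set α) : Prop :=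
  ∀ ⦃c d : α⦄, c ∈ I → r c d → d ∈ I

section helpers

/-- one alternating double step -/
def AStep (G : SimpleGraph V) (A B : Set V) (M : Set (Sym2 V)) (u v w : V) : Prop :=
  u ∈ A ∧ v ∈ B ∧ w ∈ A ∧ G.Adj u v ∧ s(u, v) ∉ M ∧ s(w, v) ∈ M

/-- alternating walks with distinct `B`-vertices -/
inductive Alt (G : SimpleGraph V) (A B : Set V) (M : Set (Sym2 V)) : List V → V → V → Prop
  | nil (u : V) : Alt G A B M [] u u
  | cons (u v w x : V) (l : List V) (h : AStep G A B M u v w) (hv : v ∉ l)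
      (t : Alt G A B M l w x) : Alt G A B M (v :: l) u x

theorem Alt.shortcut {G : SimpleGraph V} {A B : Set V} {M : Set (Sym2 V)} {l : List V} {u x v : V}
    (h : Alt G A B M l u x) (hv : v ∈ l) :
    ∃ w l', w ∈ A ∧ s(w, v) ∈ M ∧ v ∉ l' ∧ Alt G A B M l' w x := by
  induction h with
  | nil u => simp at hv
  | cons u v' w x l h hv' t ih =>
    by_cases hl : v ∈ l
    · exact ih hl
    · have : v = v' := by simpa [hl] using hv
      subst this
      exact ⟨w, l, h.2.2.1, h.2.2.2.2.2, hl, t⟩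

theorem alt_of_rtg {G : SimpleGraph V} {A B : Set V} {M : Set (Sym2 V)} {u x : V}
    (h : Relation.ReflTransGen (fun u w => ∃ v, AStep G A B M u v w) u x) :
    ∃ l, Alt G A B M l u x := by
  induction h using Relation.ReflTransGen.head_induction_on with
  | refl => exact ⟨[], .nil _⟩
  | head h _ ih =>
    obtain ⟨v, hv⟩ := h
    obtain ⟨l, hl⟩ := ih
    by_cases hvl : v ∈ l
    · obtain ⟨w, l', hw, hm, hn, ha⟩ := hl.shortcut hvl
      exact ⟨v :: l', .cons _ v w _ l' ⟨hv.1, hv.2.1, hw, hv.2.2.2.1, hv.2.2.2.2.1, hm⟩ hn ha⟩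
    · exact ⟨v :: l, .cons _ v _ _ l hv hvl hl⟩

theorem Alt.congr {G : SimpleGraph V} {A B : Set V} {M M' : Set (Sym2 V)} {l : List V} {u x v : V}
    (h : Alt G A B M l u x) (hv : v ∉ l)
    (hM : ∀ y z, y ∈ A → z ∈ B → z ≠ v → (s(y, z) ∈ M' ↔ s(y, z) ∈ M)) :
    Alt G A B M' l u x := by
  induction h with
  | nil u => exact .nil _
  | cons u v' w x l h hv' t ih =>
    simp only [List.mem_cons, not_or] at hv
    obtain ⟨h1, h2, h3, h4, h5, h6⟩ := h
    refine .cons _ _ _ _ _ ⟨h1, h2, h3, h4, ?_, ?_⟩ hv' (ih hv.2)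
    · rwa [hM _ _ h1 h2 (Ne.symm hv.1)]
    · rwa [hM _ _ h3 h2 (Ne.symm hv.1)]

theorem deg_insert {M : Set (Sym2 V)} {e : Sym2 V} (he : e ∉ M) (x : V) :
    (x ∈ e → {f ∈ insert e M | x ∈ f}.ncard = {f ∈ M | x ∈ f}.ncard + 1) ∧
    (x ∉ e → {f ∈ insert e M | x ∈ f}.ncard = {f ∈ M | x ∈ f}.ncard) := by
  constructor
  · intro hx
    have : {f ∈ insert e M | x ∈ f} = insert e {f ∈ M | x ∈ f} := by
      ext f; simp only [Set.mem_ofPred_eq, Set.mem_insert_iff]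
      constructor
      · rintro ⟨rfl | h, h'⟩ <;> simp_all
      · rintro (rfl | h) <;> simp_all
    rw [this, Set.ncard_insert_of_notMem (by simp [he]) (Set.toFinite _)]
  · intro hx
    congr 1
    ext f; simp only [Set.mem_ofPred_eq, Set.mem_insert_iff]
    constructor
    · rintro ⟨rfl | h, h'⟩ <;> simp_all
    · rintro h; simp_all

/-- removing an edge -/
theorem deg_remove {M : Set (Sym2 V)} {e : Sym2 V} (he : e ∈ M) (x : V) :
    (x ∈ e → {f ∈ M | x ∈ f}.ncard = {f ∈ M \ {e} | x ∈ f}.ncard + 1) ∧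
    (x ∉ e → {f ∈ M | x ∈ f}.ncard = {f ∈ M \ {e} | x ∈ f}.ncard) := by
  have h := deg_insert (M := M \ {e}) (e := e) (by simp) x
  rwa [Set.insert_sdiff_singleton, Set.insert_eq_of_mem he] at h

theorem no_augment {G : SimpleGraph V} {b : V → ℕ} {M : Set (Sym2 V)} {u v : V}
    (hM : IsMaxBMatching G b M) (hu : IsLoose b M u) (hv : IsLoose b M v) (ha : G.Adj u v)
    (hn : s(u, v) ∉ M) : False := by
  have : IsBMatching G b (insert s(u, v) M) := by
    refine ⟨Set.insert_subset ha hM.1.1, fun x => ?_⟩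
    have h := deg_insert hn x
    by_cases hx : x ∈ s(u, v)
    · rw [h.1 hx]
      rcases Sym2.mem_iff.1 hx with rfl | rfl
      · exact hu
      · exact hv
    · rw [h.2 hx]; exact hM.1.2 x
  have h2 := hM.2 _ this
  rw [Set.ncard_insert_of_notMem hn (Set.toFinite _)] at h2
  omega

/-- the exchange step -/
theorem exchange {G : SimpleGraph V} {b : V → ℕ} {M : Set (Sym2 V)} {u v w : V}
    (hM : IsMaxBMatching G b M) (hu : IsLoose b M u) (ha : G.Adj u v)
    (hn : s(u, v) ∉ M) (hm : s(w, v) ∈ M) :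
    IsMaxBMatching G b (insert s(u, v) (M \ {s(w, v)})) ∧
    IsLoose b (insert s(u, v) (M \ {s(w, v)})) w ∧
    ∀ x, x ≠ u → IsLoose b M x → IsLoose b (insert s(u, v) (M \ {s(w, v)})) x := by
  have hn' : s(u, v) ∉ M \ {s(w, v)} := fun h => hn h.1
  have huv := ha.ne
  have hwv : w ≠ v := (hM.1.1 hm : G.Adj w v).ne
  have huw : u ≠ w := by rintro rfl; exact hn hm
  have key : ∀ x, (x = u → {f ∈ insert s(u, v) (M \ {s(w, v)}) | x ∈ f}.ncard = {f ∈ M | x ∈ f}.ncard + 1) ∧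
      (x = w → {f ∈ insert s(u, v) (M \ {s(w, v)}) | x ∈ f}.ncard + 1 = {f ∈ M | x ∈ f}.ncard) ∧
      (x ≠ u → x ≠ w → {f ∈ insert s(u, v) (M \ {s(w, v)}) | x ∈ f}.ncard = {f ∈ M | x ∈ f}.ncard) := by
    intro x
    have h1 := deg_insert hn' x
    have h2 := deg_remove hm x
    simp only [Sym2.mem_iff] at h1 h2
    refine ⟨?_, ?_, ?_⟩
    · rintro rfl
      rw [h1.1 (.inl rfl), h2.2 (by tauto)]
    · rintro rfl
      rw [h1.2 (by tauto), h2.1 (.inl rfl)]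
    · intro a c
      by_cases hxv : x = v
      · rw [h1.1 (.inr hxv), h2.1 (.inr hxv)]
      · rw [h1.2 (by tauto), h2.2 (by tauto)]
  refine ⟨⟨⟨Set.insert_subset ha (Set.sdiff_subset.trans hM.1.1), fun x => ?_⟩, fun N hN => ?_⟩, ?_, ?_⟩
  · have k := key x
    have := hM.1.2 x
    by_cases hxu : x = u
    · rw [k.1 hxu, hxu]; exact hu
    · by_cases hxw : x = w
      · have := k.2.1 hxw; omega
      · rw [k.2.2 hxu hxw]; exact this
  · rw [Set.ncard_insert_of_notMem hn' (Set.toFinite _), Set.ncard_sdiff_singleton_add_one hm (Set.toFinite _)]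
    exact hM.2 N hN
  · have := (key w).2.1 rfl
    have := hM.1.2 w
    unfold IsLoose; omega
  · intro x hxu hx
    unfold IsLoose at *
    by_cases hxw : x = w
    · have := (key x).2.1 hxw; omega
    · rwa [(key x).2.2 hxu hxw]

theorem Alt.exchange {G : SimpleGraph V} {A B : Set V} (hG : Bipartition G A B) {b : V → ℕ}
    {l : List V} {u x : V} {M : Set (Sym2 V)}
    (h : Alt G A B M l u x) (hM : IsMaxBMatching G b M) (hu : IsLoose b M u) :
    ∃ M', IsMaxBMatching G b M' ∧ IsLoose b M' x ∧
      ∀ z ∈ B, IsLoose b M z → IsLoose b M' z ∧ ∀ y ∈ A, (s(y, z) ∈ M' ↔ s(y, z) ∈ M) := by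
  induction l generalizing u M with
  | nil => cases h; exact ⟨M, hM, hu, fun z _ hz => ⟨hz, fun _ _ => Iff.rfl⟩⟩
  | cons v l ih =>
    cases h with
    | cons _ _ w _ _ h hv t =>
    obtain ⟨h1, h2, h3, h4, h5, h6⟩ := h
    have hAB : ∀ {y z : V}, y ∈ A → z ∈ B → y ≠ z := by
      rintro y z hy hz rfl; exact hG.disjoint.le_bot ⟨hy, hz⟩
    obtain ⟨e1, e2, e3⟩ := _root_.exchange hM hu h4 h5 h6
    have hcongr : ∀ y z, y ∈ A → z ∈ B → z ≠ v →
        (s(y, z) ∈ insert s(u, v) (M \ {s(w, v)}) ↔ s(y, z) ∈ M) := by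
      intro y z hy hz hzv
      have := hAB hy h2
      have := hAB h1 hz
      have := hAB h3 hz
      simp only [Set.mem_insert_iff, Set.mem_sdiff, Set.mem_singleton_iff, Sym2.eq_iff]
      tauto
    obtain ⟨M', f1, f2, f3⟩ := ih (t.congr hv hcongr) e1 e2
    refine ⟨M', f1, f2, fun z hz hzl => ?_⟩
    have hzv : z ≠ v := by
      rintro rfl; exact no_augment hM hu hzl h4 h5
    obtain ⟨g1, g2⟩ := f3 z hz (e3 z (hAB h1 hz).symm hzl)
    exact ⟨g1, fun y hy => (g2 y hy).trans (hcongr y z hy hz hzv)⟩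

theorem exists_max (G : SimpleGraph V) (b : V → ℕ) : ∃ M, IsMaxBMatching G b M := by
  have hne : {M : Set (Sym2 V) | IsBMatching G b M}.Nonempty :=
    ⟨∅, by simp, by simp⟩
  obtain ⟨M, hM, h⟩ := Set.exists_max_image _ Set.ncard (Set.toFinite _) hne
  exact ⟨M, hM, fun N hN => h N hN⟩

open Classical in
theorem counting {G : SimpleGraph V} {A B : Set V} (hG : Bipartition G A B) (R : Set V)
    (S : Finset V) (hS : ∀ v, v ∈ S ↔ (v ∈ A ∧ v ∉ R) ∨ (v ∈ B ∧ v ∈ R))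
    (N : Set (Sym2 V)) (hN : N ⊆ G.edgeSet) :
    ∑ v ∈ S, {e ∈ N | v ∈ e}.ncard +
      {e ∈ N | ∃ u v, e = s(u, v) ∧ u ∈ A ∧ v ∈ B ∧ u ∈ R ∧ v ∉ R}.ncard
    = N.ncard + {e ∈ N | ∃ u v, e = s(u, v) ∧ u ∈ A ∧ v ∈ B ∧ u ∉ R ∧ v ∈ R}.ncard := by
  have hc : ∀ P : Sym2 V → Prop, {e ∈ N | P e}.ncard = ∑ e ∈ N.toFinset, if P e then 1 else 0 := by
    intro P
    rw [Set.ncard_eq_toFinset_card', ← Finset.card_filter]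
    congr 1
    ext e; simp
  simp only [hc]
  rw [Finset.sum_comm, Set.ncard_eq_toFinset_card', Finset.card_eq_sum_ones,
    ← Finset.sum_add_distrib, ← Finset.sum_add_distrib]
  refine Finset.sum_congr rfl fun e he => ?_
  have heG : e ∈ G.edgeSet := hN (by simpa using he)
  have main : ∀ u v : V, u ∈ A → v ∈ B →
      (∑ x ∈ S, if x ∈ s(u, v) then 1 else 0) +
      (if ∃ u' v', s(u, v) = s(u', v') ∧ u' ∈ A ∧ v' ∈ B ∧ u' ∈ R ∧ v' ∉ R then 1 else 0) =
      1 + if ∃ u' v', s(u, v) = s(u', v') ∧ u' ∈ A ∧ v' ∈ B ∧ u' ∉ R ∧ v' ∈ R then 1 else 0 := by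
    intro u v hu hv
    have hAB : ∀ {y : V}, y ∈ A → y ∈ B → False := by
      intro y hy hz; exact hG.disjoint.le_bot ⟨hy, hz⟩
    have huB : u ∉ B := fun h => hAB hu h
    have hvA : v ∉ A := fun h => hAB h hv
    have huv : u ≠ v := by rintro rfl; exact huB hv
    have e1 : (∃ u' v', s(u, v) = s(u', v') ∧ u' ∈ A ∧ v' ∈ B ∧ u' ∈ R ∧ v' ∉ R) ↔ (u ∈ R ∧ v ∉ R) := by
      constructor
      · rintro ⟨u', v', h, a, c, r⟩
        rcases Sym2.eq_iff.1 h with ⟨rfl, rfl⟩ | ⟨rfl, rfl⟩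
        · exact r
        · exact (huB c).elim
      · intro r; exact ⟨u, v, rfl, hu, hv, r⟩
    have e2 : (∃ u' v', s(u, v) = s(u', v') ∧ u' ∈ A ∧ v' ∈ B ∧ u' ∉ R ∧ v' ∈ R) ↔ (u ∉ R ∧ v ∈ R) := by
      constructor
      · rintro ⟨u', v', h, a, c, r⟩
        rcases Sym2.eq_iff.1 h with ⟨rfl, rfl⟩ | ⟨rfl, rfl⟩
        · exact r
        · exact (huB c).elim
      · intro r; exact ⟨u, v, rfl, hu, hv, r⟩
    have e3 : (∑ x ∈ S, if x ∈ s(u, v) then 1 else 0) =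
        (if u ∉ R then 1 else 0) + (if v ∈ R then 1 else 0) := by
      have : ∀ x : V, (if x ∈ s(u, v) then 1 else 0) = (if x = u then 1 else 0) + (if x = v then 1 else 0) := by
        intro x; simp only [Sym2.mem_iff]; grind
      simp only [this, Finset.sum_add_distrib, Finset.sum_ite_eq', hS]
      simp [hu, hv, huB, hvA]
    rw [e3]; simp only [e1, e2]
    by_cases h1 : u ∈ R <;> by_cases h2 : v ∈ R <;> simp [h1, h2]
  induction e using Sym2.ind with
  | _ u v =>
    rcases hG.between heG with ⟨h1, h2⟩ | ⟨h1, h2⟩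
    · convert main u v h1 h2
    · rw [Sym2.eq_swap]; convert main v u h2 h1

end helpers

/-- If `C` is a `b`-inconsistent flexible component hooked up by `A` and `D` is a
`b`-flexible component not inconsistent hooked up by `A`, then every edge between
`V(C) ∩ A` and `V(D) ∩ B` is `b`-inevitable and every edge between `V(D) ∩ A` and
`V(C) ∩ B` is `b`-forbidden. -/
theorem stmt_10 (G : SimpleGraph V) (A B : Set V) (hG : Bipartition G A B) (b : V → ℕ)
    (c d : FlexComp G b) (hc : HookedUp G b A c) (hd : ¬ HookedUp G b A d) :
    (∀ u ∈ c.supp ∩ A, ∀ v ∈ d.supp ∩ B, G.Adj u v → IsInevitable G b s(u, v)) ∧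
    (∀ u ∈ d.supp ∩ A, ∀ v ∈ c.supp ∩ B, G.Adj u v → IsForbidden G b s(u, v)) := by
  have hAB : ∀ {y : V}, y ∈ A → y ∈ B → False := by
    intro y hy hz; exact hG.disjoint.le_bot ⟨hy, hz⟩
  obtain ⟨M, hM⟩ := exists_max G b
  set RA : Set V := {x | x ∈ A ∧ ∃ u ∈ A, IsLoose b M u ∧
    Relation.ReflTransGen (fun u w => ∃ v, AStep G A B M u v w) u x} with hRA
  set RB : Set V := {v | v ∈ B ∧ ∃ u ∈ RA, G.Adj u v ∧ s(u, v) ∉ M} with hRB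
  have RA_D : ∀ x ∈ RA, ∃ M', IsMaxBMatching G b M' ∧ IsLoose b M' x ∧
      ∀ z ∈ B, IsLoose b M z → IsLoose b M' z ∧ ∀ y ∈ A, (s(y, z) ∈ M' ↔ s(y, z) ∈ M) := by
    rintro x ⟨-, u, hu, hl, hr⟩
    obtain ⟨l, h⟩ := alt_of_rtg hr
    exact h.exchange hG hM hl
  have RB_tight : ∀ v ∈ RB, ¬ IsLoose b M v := by
    rintro v ⟨hv, u, hu, ha, hn⟩ hl
    obtain ⟨M', m1, m2, m3⟩ := RA_D u hu
    obtain ⟨m4, m5⟩ := m3 v hv hl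
    exact no_augment m1 m2 m4 ha (by rwa [m5 u hu.1])
  have closed : ∀ v ∈ RB, ∀ w ∈ A, s(w, v) ∈ M → w ∈ RA := by
    rintro v ⟨hv, u, ⟨huA, u0, hu0, hl, hr⟩, ha, hn⟩ w hw hm
    exact ⟨hw, u0, hu0, hl, hr.tail ⟨v, huA, hv, hw, ha, hn, hm⟩⟩
  set R : Set V := RA ∪ RB with hR
  have RA_iff : ∀ x ∈ A, (x ∈ R ↔ x ∈ RA) := fun x hx =>
    ⟨fun h => h.elim id fun h => (hAB hx h.1).elim, Or.inl⟩
  have RB_iff : ∀ x ∈ B, (x ∈ R ↔ x ∈ RB) := fun x hx =>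
    ⟨fun h => h.elim (fun h => (hAB h.1 hx).elim) id, Or.inr⟩
  classical
  have loose_R : ∀ v ∈ A, IsLoose b M v → v ∈ R := fun v hv hl =>
    .inl ⟨hv, v, hv, hl, .refl⟩
  have tightM : ∀ v, (v ∈ A ∧ v ∉ R) ∨ (v ∈ B ∧ v ∈ R) → {e ∈ M | v ∈ e}.ncard = b v := by
    intro v hv
    have h1 := hM.1.2 v
    have h2 : ¬ IsLoose b M v := by
      rcases hv with ⟨ha, hr⟩ | ⟨hb, hr⟩
      · exact fun h => hr (loose_R v ha h)
      · exact RB_tight v ((RB_iff v hb).1 hr)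
    unfold IsLoose at h2; omega
  obtain ⟨S, hS⟩ : ∃ S : Finset V, ∀ v, v ∈ S ↔ (v ∈ A ∧ v ∉ R) ∨ (v ∈ B ∧ v ∈ R) :=
    ⟨Finset.univ.filter (fun v => (v ∈ A ∧ v ∉ R) ∨ (v ∈ B ∧ v ∈ R)), by simp⟩
  have cM := counting hG R S hS M hM.1.1
  have hM4 : {e ∈ M | ∃ u v, e = s(u, v) ∧ u ∈ A ∧ v ∈ B ∧ u ∉ R ∧ v ∈ R} = ∅ := by
    ext e
    simp only [Set.mem_ofPred_eq, Set.mem_empty_iff_false, iff_false]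
    rintro ⟨he, u, v, rfl, hu, hv, h1, h2⟩
    exact h1 (.inl (closed v ((RB_iff v hv).1 h2) u hu he))
  have hM3 : {e ∈ M | ∃ u v, e = s(u, v) ∧ u ∈ A ∧ v ∈ B ∧ u ∈ R ∧ v ∉ R} =
      {e ∈ G.edgeSet | ∃ u v, e = s(u, v) ∧ u ∈ A ∧ v ∈ B ∧ u ∈ R ∧ v ∉ R} := by
    ext e
    constructor
    · rintro ⟨h, h'⟩; exact ⟨hM.1.1 h, h'⟩
    · rintro ⟨h, u, v, rfl, hu, hv, h1, h2⟩
      refine ⟨?_, u, v, rfl, hu, hv, h1, h2⟩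
      by_contra hn
      exact h2 (.inr ⟨hv, u, (RA_iff u hu).1 h1, h, hn⟩)
  rw [hM4, hM3, Set.ncard_empty, Finset.sum_congr rfl (g := fun v => b v)
    (fun v hv => tightM v ((hS v).1 hv))] at cM
  have core : ∀ N, IsMaxBMatching G b N →
      (∀ u ∈ A, u ∉ R → ¬ IsLoose b N u) ∧
      (∀ u ∈ A, ∀ v ∈ B, u ∈ R → v ∉ R → G.Adj u v → s(u, v) ∈ N) ∧
      (∀ u ∈ A, ∀ v ∈ B, u ∉ R → v ∈ R → s(u, v) ∉ N) := by
    intro N hN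
    have cN := counting hG R S hS N hN.1.1
    have hcard : N.ncard = M.ncard := le_antisymm (hM.2 N hN.1) (hN.2 M hM.1)
    have hsub : {e ∈ N | ∃ u v, e = s(u, v) ∧ u ∈ A ∧ v ∈ B ∧ u ∈ R ∧ v ∉ R} ⊆
        {e ∈ G.edgeSet | ∃ u v, e = s(u, v) ∧ u ∈ A ∧ v ∈ B ∧ u ∈ R ∧ v ∉ R} :=
      fun e h => ⟨hN.1.1 h.1, h.2⟩
    have l1 := Set.ncard_le_ncard hsub (Set.toFinite _)
    have l2 := Finset.sum_le_sum (s := S) (fun v _ => hN.1.2 v)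
    refine ⟨?_, ?_, ?_⟩
    · intro u hu hur hl
      have := Finset.sum_lt_sum (s := S) (fun v _ => hN.1.2 v)
        ⟨u, (hS u).2 (.inl ⟨hu, hur⟩), hl⟩
      omega
    · intro u hu v hv h1 h2 ha
      have := Set.eq_of_subset_of_ncard_le hsub (by omega) (Set.toFinite _)
      have hmem : s(u, v) ∈ {e ∈ G.edgeSet | ∃ u v, e = s(u, v) ∧ u ∈ A ∧ v ∈ B ∧ u ∈ R ∧ v ∉ R} :=
        ⟨ha, u, v, rfl, hu, hv, h1, h2⟩
      rw [← this] at hmem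
      exact hmem.1
    · intro u hu v hv h1 h2 he
      have : 0 < {e ∈ N | ∃ u v, e = s(u, v) ∧ u ∈ A ∧ v ∈ B ∧ u ∉ R ∧ v ∈ R}.ncard :=
        (Set.ncard_pos (Set.toFinite _)).2 ⟨s(u, v), he, u, v, rfl, hu, hv, h1, h2⟩
      omega
  have D_R : ∀ u ∈ A, u ∈ Dset G b → u ∈ R := by
    rintro u hu ⟨N, hN, hl⟩
    by_contra h
    exact (core N hN).1 u hu h hl
  -- flexible edges do not leave `R`
  have flexAB : ∀ u ∈ A, ∀ v ∈ B, IsFlexibleEdge G b s(u, v) → (u ∈ R ↔ v ∈ R) := by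
    rintro u hu v hv ⟨⟨N, hN, h1⟩, N', hN', h2⟩
    constructor
    · intro h
      by_contra h'
      exact h2 ((core N' hN').2.1 u hu v hv h h' (hN.1.1 h1))
    · intro h
      by_contra h'
      exact (core N hN).2.2 u hu v hv h' h h1
  have flex : ∀ u v, (flexGraph G b).Adj u v → (u ∈ R ↔ v ∈ R) := by
    intro u v h
    have h' : IsFlexibleEdge G b s(u, v) := h
    obtain ⟨⟨N, hN, h1⟩, -⟩ := h
    rcases hG.between (hN.1.1 h1) with ⟨a, c⟩ | ⟨a, c⟩
    · exact flexAB u a v c h'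
    · rw [Sym2.eq_swap] at h'; exact (flexAB v c u a h').symm
  have reach : ∀ u v, (flexGraph G b).Reachable u v → (u ∈ R ↔ v ∈ R) := by
    rintro u v ⟨p⟩
    induction p with
    | nil => rfl
    | cons h _ ih => exact (flex _ _ h).trans ih
  have comp : ∀ (c : FlexComp G b), ∀ x ∈ c.supp, ∀ y ∈ c.supp, (x ∈ R ↔ y ∈ R) := by
    intro c x hx y hy
    exact reach x y (SimpleGraph.ConnectedComponent.exact (hx.trans hy.symm))
  have hcR : ∀ x ∈ c.supp, x ∈ R := by
    intro x hx
    rcases hc with ⟨v, ⟨hv, hvA⟩, hD⟩ | ⟨v, hs, hb, u, ⟨hD, huA⟩, ha⟩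
    · exact (comp c x hx v hv).2 (D_R v hvA hD)
    · rw [hs] at hx
      obtain rfl : x = v := hx
      have hvB : x ∈ B := by
        rcases hG.between ha with h | h
        · exact (hAB huA h.2).elim
        · exact h.1
      refine .inr ⟨hvB, u, (RA_iff u huA).1 (D_R u huA hD), ha.symm, fun hm => ?_⟩
      have h0 := hM.1.2 x
      rw [hb, Nat.le_zero, Set.ncard_eq_zero (Set.toFinite _)] at h0
      have : s(u, x) ∈ {e ∈ M | x ∈ e} := ⟨hm, by simp⟩
      rw [h0] at this; exact this
  have hdR : ∀ x ∈ d.supp, x ∉ R := by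
    rintro x hx (hr | hr)
    · obtain ⟨M', m1, m2, -⟩ := RA_D x hr
      exact hd (.inl ⟨x, ⟨hx, hr.1⟩, M', m1, m2⟩)
    · obtain ⟨hxB, u, hu, ha, hn⟩ := hr
      obtain ⟨M1, m1, m2, -⟩ := RA_D u hu
      have adjmem : ∀ w, (flexGraph G b).Adj w x → w ∈ d.supp := fun w hw =>
        (SimpleGraph.ConnectedComponent.sound hw.reachable).trans hx
      by_cases h1 : s(u, x) ∈ M1
      · exact hd (.inl ⟨u, ⟨adjmem u ⟨⟨M1, m1, h1⟩, M, hM, hn⟩, hu.1⟩, M1, m1, m2⟩)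
      · by_cases hb : b x = 0
        · refine hd (.inr ⟨x, ?_, hb, u, ⟨⟨M1, m1, m2⟩, hu.1⟩, ha.symm⟩)
          ext y
          simp only [Set.mem_singleton_iff]
          constructor
          · intro hy
            obtain ⟨p⟩ : (flexGraph G b).Reachable x y :=
              SimpleGraph.ConnectedComponent.exact (hx.trans hy.symm)
            cases p with
            | nil => rfl
            | @cons _ z _ h _ =>
              exfalso
              obtain ⟨⟨N, hN, h1⟩, -⟩ := h
              have h0 := hN.1.2 x
              rw [hb, Nat.le_zero, Set.ncard_eq_zero (Set.toFinite _)] at h0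
              have : s(x, z) ∈ {e ∈ N | x ∈ e} := ⟨h1, by simp⟩
              rw [h0] at this; exact this
          · rintro rfl; exact hx
        · have ht : ¬ IsLoose b M1 x := fun hl => no_augment m1 m2 hl ha h1
          have hpos : 0 < {e ∈ M1 | x ∈ e}.ncard := by
            unfold IsLoose at ht; omega
          obtain ⟨e, he, hxe⟩ := (Set.ncard_pos (Set.toFinite _)).1 hpos
          obtain ⟨w, rfl⟩ := hxe
          have he' : s(w, x) ∈ M1 := by rwa [Sym2.eq_swap]
          have hwA : w ∈ A := by
            rcases hG.between (m1.1.1 he' : G.Adj w x) with h | h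
            · exact h.1
            · exact (hAB h.2 hxB).elim
          obtain ⟨e1, e2, -⟩ := exchange m1 m2 ha h1 he'
          refine hd (.inl ⟨w, ⟨adjmem w ⟨⟨M1, m1, he'⟩, _, e1, ?_⟩, hwA⟩, _, e1, e2⟩)
          rintro (h | h)
          · exact h1 (h ▸ he')
          · exact h.2 rfl
  refine ⟨fun u hu v hv ha => ⟨ha, fun N hN => ?_⟩, fun u hu v hv ha => ⟨ha, fun N hN => ?_⟩⟩
  · exact (core N hN).2.1 u hu.2 v hv.2 (hcR u hu.1) (hdR v hv.1) ha
  · exact (core N hN).2.2 u hu.2 v hv.2 (hdR u hu.1) (hcR v hv.1)
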